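/- arXiv:2402.10199 — 6 statements merged into one kernel-verified Lean document; each statement's English description precedes it below -/
import Mathlib

section
/- Let (X, σ_X) be a one-sided subshift with the weak specification property and 𝓕 = {log f_n} a sequence of continuous functions on X satisfying f_{n+m}(x) ≤ e^C f_n(x) f_m(σ_X^n x) for some C > 0 and all x ∈ X, n, m ∈ ℕ. Define f̲(x) := liminf_{n→∞} log(f_n(x)/f_{n-1}(σ_X x)), valued in [−∞, ∞). Then f̲ is bounded above (by C + max_{x∈X} log f_1(x)), and for every x ∈ X and k ∈ ℕ one has Σ_{i=0}^{k-1} f̲(σ_X^i x) ≤ C + log f_k(x) (sum taken in the extended reals); equivalently f_k(x)/e^{(S_k f̲)(x)} ≥ e^{−C}. -/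
open MeasureTheory Filter Topology

noncomputable section

/-- The one-sided shift map. -/
def shift {A : Type*} : (ℕ → A) → ℕ → A := fun x i => x (i + 1)

/-- A finite word appears in some point of `X`. -/
def AppearsIn {A : Type*} (X : Set (ℕ → A)) (w : List A) : Prop :=
  ∃ x ∈ X, ∃ m : ℕ, ∀ i : Fin w.length, x (m + i) = w.get i

/-- `X` is a (one-sided) subshift: a closed, shift-invariant set. -/
def IsSubshift {A : Type*} [TopologicalSpace A] (X : Set (ℕ → A)) : Prop :=
  IsClosed X ∧ shift '' X ⊆ X

/-- The weak specification property. -/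
def WeakSpec {A : Type*} (X : Set (ℕ → A)) : Prop :=
  ∃ p : ℕ, ∀ u v : List A, AppearsIn X u → AppearsIn X v →
    ∃ w : List A, w.length ≤ p ∧ AppearsIn X (u ++ w ++ v)

/-- The cylinder set `[x_1 … x_n]` inside `X`. -/
def cyl {A : Type*} (X : Set (ℕ → A)) (x : ℕ → A) (n : ℕ) : Set (ℕ → A) :=
  {z ∈ X | ∀ i < n, z i = x i}

/-- Birkhoff sum `(S_n g)(x)`. -/
def birk {A : Type*} (g : (ℕ → A) → ℝ) (n : ℕ) (x : ℕ → A) : ℝ :=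
  ∑ i ∈ Finset.range n, g (shift^[i] x)

/-- `μ` is a shift-invariant Borel probability measure concentrated on `X`,
i.e. an element of `M(X, σ_X)`. -/
def IsInvariantOn {A : Type*} [MeasurableSpace A] (μ : Measure (ℕ → A))
    (X : Set (ℕ → A)) : Prop :=
  IsProbabilityMeasure μ ∧ μ X = 1 ∧
    ∀ B : Set (ℕ → A), MeasurableSet B → μ (shift ⁻¹' B) = μ B

/-- `μ` is a Gibbs measure for the sequence `𝓕 = {log f_n}`. -/
def GibbsSeq {A : Type*} [MeasurableSpace A] (X : Set (ℕ → A))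
    (f : ℕ → (ℕ → A) → ℝ) (μ : Measure (ℕ → A)) : Prop :=
  ∃ P C : ℝ, 0 < C ∧ ∀ x ∈ X, ∀ n : ℕ, 1 ≤ n →
    C⁻¹ ≤ (μ (cyl X x n)).toReal / (Real.exp (-(n : ℝ) * P) * f n x) ∧
    (μ (cyl X x n)).toReal / (Real.exp (-(n : ℝ) * P) * f n x) ≤ C

/-- `μ` is a weak Gibbs measure for the sequence `𝓕 = {log f_n}`. -/
def WeakGibbsSeq {A : Type*} [MeasurableSpace A] (X : Set (ℕ → A))
    (f : ℕ → (ℕ → A) → ℝ) (μ : Measure (ℕ → A)) : Prop :=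
  ∃ P : ℝ, ∃ C : ℕ → ℝ, (∀ n : ℕ, 1 ≤ n → 0 < C n) ∧
    Tendsto (fun n : ℕ => Real.log (C n) / n) atTop (𝓝 0) ∧
    ∀ x ∈ X, ∀ n : ℕ, 1 ≤ n →
      (C n)⁻¹ ≤ (μ (cyl X x n)).toReal / (Real.exp (-(n : ℝ) * P) * f n x) ∧
      (μ (cyl X x n)).toReal / (Real.exp (-(n : ℝ) * P) * f n x) ≤ C n

/-- `μ` is a Gibbs measure for the (Borel measurable) function `g`. -/
def GibbsFun {A : Type*} [MeasurableSpace A] (X : Set (ℕ → A))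
    (g : (ℕ → A) → ℝ) (μ : Measure (ℕ → A)) : Prop :=
  GibbsSeq X (fun n x => Real.exp (birk g n x)) μ

/-- `μ` is a weak Gibbs measure for the (Borel measurable) function `g`. -/
def WeakGibbsFun {A : Type*} [MeasurableSpace A] (X : Set (ℕ → A))
    (g : (ℕ → A) → ℝ) (μ : Measure (ℕ → A)) : Prop :=
  WeakGibbsSeq X (fun n x => Real.exp (birk g n x)) μ

/-!
With `a n = log f_n`, the increments `a (n + 1) x - a n (T x)` telescope along the orbit of `x`:
`m` of them, with suitably shifted indices, add up to `a (n + m) x - a n (T^[m] x)`. Superadditivity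
of `liminf` therefore bounds the Birkhoff sum of the lower limits of the increments by the lower
limit of `a (n + m) x - a n (T^[m] x)`, and almost subadditivity of `a` bounds each of these terms
by `C + a m x`, uniformly in `n`.
-/

section

variable {α : Type*} {T : α → α} {x : α}

/-- The lower limit of the increments `a (n + 1) x - a n (T x)`, valued in the extended reals. For
`a n = log f_n` and `T` the shift this is the function `f̲`. -/
def liminfIncrement (T : α → α) (a : ℕ → α → ℝ) (x : α) : EReal :=
  liminf (fun n : ℕ => ((a (n + 1) x - a n (T x) : ℝ) : EReal)) atTop

theorem birkhoffSum_liminfIncrement_le_liminf (T : α → α) (a : ℕ → α → ℝ) (m : ℕ) (x : α) :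
    birkhoffSum T (liminfIncrement T a) m x ≤
      liminf (fun n : ℕ => ((a (n + m) x - a n (T^[m] x) : ℝ) : EReal)) atTop := by
  induction m with
  | zero => simp
  | succ m ih =>
    have telescope (n : ℕ) :
        (a (n + 1 + m) x - a (n + 1) (T^[m] x)) + (a (n + 1) (T^[m] x) - a n (T (T^[m] x))) =
          a (n + (m + 1)) x - a n (T^[m + 1] x) := by
      rw [Function.iterate_succ_apply', add_assoc n 1 m, add_comm 1 m, sub_add_sub_cancel]
    rw [← liminf_nat_add _ 1] at ih
    calc birkhoffSum T (liminfIncrement T a) (m + 1) x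
        = birkhoffSum T (liminfIncrement T a) m x + liminfIncrement T a (T^[m] x) :=
          birkhoffSum_succ ..
      _ ≤ liminf (fun n : ℕ => ((a (n + 1 + m) x - a (n + 1) (T^[m] x) : ℝ) : EReal)) atTop +
            liminf (fun n : ℕ => ((a (n + 1) (T^[m] x) - a n (T (T^[m] x)) : ℝ) : EReal)) atTop :=
          add_le_add_left ih _
      _ ≤ _ := EReal.le_liminf_add
      _ = liminf (fun n : ℕ => ((a (n + (m + 1)) x - a n (T^[m + 1] x) : ℝ) : EReal)) atTop := by
          simp only [Pi.add_def, ← EReal.coe_add, telescope]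

theorem birkhoffSum_liminfIncrement_le {a : ℕ → α → ℝ} {C : ℝ} {m : ℕ}
    (h : ∃ᶠ n in atTop, a (m + n) x ≤ C + a m x + a n (T^[m] x)) :
    birkhoffSum T (liminfIncrement T a) m x ≤ ((C + a m x : ℝ) : EReal) := by
  refine (birkhoffSum_liminfIncrement_le_liminf T a m x).trans
    (liminf_le_of_frequently_le' (h.mono fun n hn => ?_))
  rw [EReal.coe_le_coe_iff, add_comm n m]
  exact sub_le_iff_le_add.2 hn

theorem liminf_log_div_eq_liminfIncrement {f : ℕ → α → ℝ}
    (hf : ∀ n, 1 ≤ n → f n x ≠ 0) (hfT : ∀ n, 1 ≤ n → f n (T x) ≠ 0) :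
    liminf (fun n : ℕ => ((Real.log (f (n + 2) x / f (n + 1) (T x)) : ℝ) : EReal)) atTop =
      liminfIncrement T (fun n y => Real.log (f n y)) x := by
  simp only [Real.log_div (hf _ (Nat.le_add_left 1 _)) (hfT _ (Nat.le_add_left 1 _))]
  exact liminf_nat_add (fun n => ((Real.log (f (n + 1) x) - Real.log (f n (T x)) : ℝ) : EReal)) 1

theorem log_le_of_le_exp_mul_mul {C p q r : ℝ} (hr : 0 < r) (hp : p ≠ 0) (hq : q ≠ 0)
    (h : r ≤ Real.exp C * (p * q)) : Real.log r ≤ C + Real.log p + Real.log q := by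
  calc Real.log r ≤ Real.log (Real.exp C * (p * q)) := Real.log_le_log hr h
    _ = C + Real.log p + Real.log q := by
      rw [Real.log_mul (Real.exp_ne_zero C) (mul_ne_zero hp hq), Real.log_exp,
        Real.log_mul hp hq, add_assoc]

end

theorem stmt_2_general {α : Type*} {T : α → α} {X : Set α} (hT : Set.MapsTo T X X)
    {f : ℕ → α → ℝ} (hfpos : ∀ n : ℕ, 1 ≤ n → ∀ x ∈ X, 0 < f n x)
    (hbdd : BddAbove ((fun z => Real.log (f 1 z)) '' X)) {C : ℝ}
    (hsub : ∀ x ∈ X, ∀ n m : ℕ, 1 ≤ n → 1 ≤ m →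
      f (n + m) x ≤ Real.exp C * (f n x * f m (T^[n] x)))
    {flow : α → EReal}
    (hflow : ∀ x ∈ X,
      flow x = liminf
        (fun n : ℕ => ((Real.log (f (n + 2) x / f (n + 1) (T x)) : ℝ) : EReal)) atTop) :
    (∀ x ∈ X, flow x ≤ ((C + sSup ((fun z => Real.log (f 1 z)) '' X) : ℝ) : EReal)) ∧
    (∀ x ∈ X, ∀ m : ℕ, 1 ≤ m →
      birkhoffSum T flow m x ≤ ((C + Real.log (f m x) : ℝ) : EReal)) := by
  have flow_eq : ∀ x ∈ X, flow x = liminfIncrement T (fun n y => Real.log (f n y)) x :=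
    fun x hx => (hflow x hx).trans <| liminf_log_div_eq_liminfIncrement
      (fun n hn => (hfpos n hn x hx).ne') (fun n hn => (hfpos n hn _ (hT hx)).ne')
  have birkhoffSum_flow_le : ∀ x ∈ X, ∀ m : ℕ, 1 ≤ m →
      birkhoffSum T flow m x ≤ ((C + Real.log (f m x) : ℝ) : EReal) := by
    intro x hx m hm
    have hx_orbit (i : ℕ) : T^[i] x ∈ X := hT.iterate i hx
    rw [birkhoffSum, Finset.sum_congr rfl fun i _ => flow_eq _ (hx_orbit i)]
    refine birkhoffSum_liminfIncrement_le (Eventually.frequently ?_)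
    filter_upwards [eventually_ge_atTop 1] with n hn
    exact log_le_of_le_exp_mul_mul (hfpos _ (Nat.le_add_right_of_le hm) x hx)
      (hfpos m hm x hx).ne' (hfpos n hn _ (hx_orbit m)).ne' (hsub x hx m n hm hn)
  refine ⟨fun x hx => ?_, birkhoffSum_flow_le⟩
  calc flow x = birkhoffSum T flow 1 x := (birkhoffSum_one T flow x).symm
    _ ≤ ((C + Real.log (f 1 x) : ℝ) : EReal) := birkhoffSum_flow_le x hx 1 le_rfl
    _ ≤ _ := EReal.coe_le_coe_iff.2 <|
      add_le_add_right (le_csSup hbdd (Set.mem_image_of_mem _ hx)) C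

/-- Lemma `prego1` (i): for a sequence satisfying the subadditivity-type
bound, `f̲ = liminf log (f_n / f_{n-1} ∘ σ)` is bounded above by `C + max_{x ∈ X} log f_1`,
and `(S_k f̲)(x) ≤ C + log f_k(x)` (in the extended reals). -/
theorem stmt_2 {k : ℕ} (X : Set (ℕ → Fin k))
    (hX : IsSubshift X) (hspec : WeakSpec X)
    (f : ℕ → (ℕ → Fin k) → ℝ)
    (hfc : ∀ n : ℕ, 1 ≤ n → ContinuousOn (f n) X)
    (hfpos : ∀ n : ℕ, 1 ≤ n → ∀ x ∈ X, 0 < f n x)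
    (C : ℝ) (hC : 0 < C)
    (hsub : ∀ x ∈ X, ∀ n m : ℕ, 1 ≤ n → 1 ≤ m →
      f (n + m) x ≤ Real.exp C * (f n x * f m (shift^[n] x)))
    (flow : (ℕ → Fin k) → EReal)
    (hflow : ∀ x ∈ X,
      flow x = Filter.liminf
        (fun n : ℕ => ((Real.log (f (n + 2) x / f (n + 1) (shift x))) : EReal)) atTop) :
    (∀ x ∈ X, flow x ≤ ((C + sSup ((fun z => Real.log (f 1 z)) '' X) : ℝ) : EReal)) ∧
    (∀ x ∈ X, ∀ m : ℕ, 1 ≤ m →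
      ∑ i ∈ Finset.range m, flow (shift^[i] x) ≤ ((C + Real.log (f m x) : ℝ) : EReal)) := by
  exact stmt_2_general (Set.mapsTo_iff_image_subset.2 hX.2) hfpos (hX.1.isCompact.bddAbove_image <|
    (hfc 1 le_rfl).log fun z hz => (hfpos 1 le_rfl z hz).ne') hsub hflow
end
end

section
/- Let (X, σ_X) be a one-sided subshift with the weak specification property and 𝓕 = {log f_n} a sequence of continuous functions on X satisfying f_{n+m}(x) ≥ e^{−C} f_n(x) f_m(σ_X^n x) for some C > 0 and all x ∈ X, n, m ∈ ℕ. Define f̄(x) := limsup_{n→∞} log(f_n(x)/f_{n-1}(σ_X x)), valued in (−∞, ∞]. Then f̄ is bounded below (by −C + min_{x∈X} log f_1(x)), and for every x ∈ X and k ∈ ℕ one has Σ_{i=0}^{k-1} f̄(σ_X^i x) ≥ −C + log f_k(x) (sum taken in the extended reals); equivalently f_k(x)/e^{(S_k f̄)(x)} ≤ e^{C}. -/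
open MeasureTheory Filter Topology

noncomputable section

/-!
Write `g n = log (f n)` and `d n x = g (n + 1) x - g n (σ x)`, so that `f̄ x = limsup d n x`. The
difference `g (n + m) x - g n (σ^m x)` telescopes into `m` terms `d (n + j) (σ^i x)` with
`i + j + 1 = m`, hence its limsup over `n` is at most `(S_m f̄) x`; here `f̄ > -∞` rules out the
indeterminate sum `∞ - ∞`. Almost superadditivity bounds the same difference below by
`-C + g m x` for every `n ≥ 1`. The case `m = 1` is the lower bound on `f̄`.
-/

theorem limsup_add_le_add_of_ne_bot {ι : Type*} {l : Filter ι} {u v : ι → EReal} {a b : EReal}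
    (ha : a ≠ ⊥) (hb : b ≠ ⊥) (hu : limsup u l ≤ a) (hv : limsup v l ≤ b) :
    limsup (u + v) l ≤ a + b := by
  refine EReal.le_add_of_forall_gt (.inl ha) (.inr hb) fun a' ha' b' hb' ↦ ?_
  exact EReal.limsup_add_le_of_le (hu.trans_lt ha') (hv.trans hb'.le)

theorem birkhoffSum_ne_bot {α : Type*} {T : α → α} {φ : α → EReal} {x : α} {m : ℕ}
    (hφ : ∀ i < m, φ (T^[i] x) ≠ ⊥) : birkhoffSum T φ m x ≠ ⊥ :=
  Finset.sum_induction _ (· ≠ ⊥) (fun _ _ ha hb ↦ EReal.add_ne_bot_iff.2 ⟨ha, hb⟩)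
    EReal.zero_ne_bot fun i hi ↦ hφ i (Finset.mem_range.1 hi)

section UpperIncrement

variable {α : Type*} {T : α → α} {X : Set α} {g : ℕ → α → ℝ} {C : ℝ} {x : α}

/-- The function `x ↦ limsup (g (n + 1) x - g n (T x))`, with values in the extended reals. For
`g n = log (f n)` this is the function `f̄` attached to the sequence `{log f n}`; the indices are
shifted so that no subtraction on `ℕ` occurs. -/
def upperIncrement (T : α → α) (g : ℕ → α → ℝ) (x : α) : EReal :=
  limsup (fun n : ℕ ↦ ((g (n + 1) x - g n (T x) : ℝ) : EReal)) atTop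

/-- Superadditivity of the sequence `g` along the orbits of `T` starting in `X`, up to the additive
error `C`. The function `g 0` is left unconstrained, since the sequences `{log f n}` start at
`n = 1`. -/
def AlmostSuperadditiveOn (T : α → α) (X : Set α) (g : ℕ → α → ℝ) (C : ℝ) : Prop :=
  ∀ x ∈ X, ∀ n m : ℕ, 1 ≤ n → 1 ≤ m → -C + (g n x + g m (T^[n] x)) ≤ g (n + m) x

theorem limsup_sub_iterate_le_birkhoffSum_upperIncrement {m : ℕ}
    (hbot : ∀ i < m, upperIncrement T g (T^[i] x) ≠ ⊥) :
    limsup (fun n : ℕ ↦ ((g (n + m) x - g n (T^[m] x) : ℝ) : EReal)) atTop ≤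
      birkhoffSum T (upperIncrement T g) m x := by
  induction m generalizing x with
  | zero => simp
  | succ m ih =>
    have hbot_tail : ∀ i < m, upperIncrement T g (T^[i] (T x)) ≠ ⊥ :=
      fun i hi ↦ hbot (i + 1) (by lia)
    have hstep : limsup (fun n : ℕ ↦ ((g (n + m + 1) x - g (n + m) (T x) : ℝ) : EReal)) atTop =
        upperIncrement T g x :=
      limsup_nat_add (fun n ↦ ((g (n + 1) x - g n (T x) : ℝ) : EReal)) m
    have htelescope : (fun n : ℕ ↦ ((g (n + (m + 1)) x - g n (T^[m + 1] x) : ℝ) : EReal)) =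
        (fun n : ℕ ↦ ((g (n + m + 1) x - g (n + m) (T x) : ℝ) : EReal)) +
          fun n : ℕ ↦ ((g (n + m) (T x) - g n (T^[m] (T x)) : ℝ) : EReal) := by
      ext n
      rw [Pi.add_apply, ← EReal.coe_add, sub_add_sub_cancel, Function.iterate_succ_apply, add_assoc]
    rw [birkhoffSum_succ', htelescope]
    exact limsup_add_le_add_of_ne_bot (hbot 0 m.succ_pos) (birkhoffSum_ne_bot hbot_tail)
      hstep.le (ih hbot_tail)

namespace AlmostSuperadditiveOn

theorem le_limsup_sub_iterate (hg : AlmostSuperadditiveOn T X g C) (hx : x ∈ X) {m : ℕ}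
    (hm : 1 ≤ m) :
    ((-C + g m x : ℝ) : EReal) ≤
      limsup (fun n : ℕ ↦ ((g (n + m) x - g n (T^[m] x) : ℝ) : EReal)) atTop := by
  refine le_limsup_of_frequently_le (Eventually.frequently ?_)
  filter_upwards [eventually_ge_atTop 1] with n hn
  have hsuper := hg x hx m n hm hn
  rw [add_comm m n] at hsuper
  exact EReal.coe_le_coe (by linarith)

theorem le_upperIncrement (hg : AlmostSuperadditiveOn T X g C) (hx : x ∈ X) :
    ((-C + g 1 x : ℝ) : EReal) ≤ upperIncrement T g x :=
  hg.le_limsup_sub_iterate hx le_rfl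

theorem upperIncrement_ne_bot (hg : AlmostSuperadditiveOn T X g C) (hx : x ∈ X) :
    upperIncrement T g x ≠ ⊥ :=
  ((EReal.bot_lt_coe _).trans_le (hg.le_upperIncrement hx)).ne'

theorem le_birkhoffSum_upperIncrement (hg : AlmostSuperadditiveOn T X g C)
    (hT : Set.MapsTo T X X) (hx : x ∈ X) {m : ℕ} (hm : 1 ≤ m) :
    ((-C + g m x : ℝ) : EReal) ≤ birkhoffSum T (upperIncrement T g) m x :=
  (hg.le_limsup_sub_iterate hx hm).trans <|
    limsup_sub_iterate_le_birkhoffSum_upperIncrement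
      fun i _ ↦ hg.upperIncrement_ne_bot (hT.iterate i hx)

end AlmostSuperadditiveOn

end UpperIncrement

section Log

variable {α : Type*} {T : α → α} {X : Set α} {f : ℕ → α → ℝ}

theorem almostSuperadditiveOn_log {C : ℝ} (hT : Set.MapsTo T X X)
    (hfpos : ∀ n : ℕ, 1 ≤ n → ∀ x ∈ X, 0 < f n x)
    (hsup : ∀ x ∈ X, ∀ n m : ℕ, 1 ≤ n → 1 ≤ m →
      Real.exp (-C) * (f n x * f m (T^[n] x)) ≤ f (n + m) x) :
    AlmostSuperadditiveOn T X (fun n x ↦ Real.log (f n x)) C := by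
  intro x hx n m hn hm
  have hfn : 0 < f n x := hfpos n hn x hx
  have hfm : 0 < f m (T^[n] x) := hfpos m hm _ (hT.iterate n hx)
  calc -C + (Real.log (f n x) + Real.log (f m (T^[n] x)))
      = Real.log (Real.exp (-C) * (f n x * f m (T^[n] x))) := by
        rw [Real.log_mul (Real.exp_ne_zero _) (mul_pos hfn hfm).ne', Real.log_exp,
          Real.log_mul hfn.ne' hfm.ne']
    _ ≤ Real.log (f (n + m) x) := Real.log_le_log (by positivity) (hsup x hx n m hn hm)

theorem limsup_log_div_eq_upperIncrement (hT : Set.MapsTo T X X)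
    (hfpos : ∀ n : ℕ, 1 ≤ n → ∀ x ∈ X, 0 < f n x) {x : α} (hx : x ∈ X) :
    limsup (fun n : ℕ ↦ ((Real.log (f (n + 2) x / f (n + 1) (T x))) : EReal)) atTop =
      upperIncrement T (fun n z ↦ Real.log (f n z)) x := by
  refine Eq.trans ?_ (limsup_nat_add _ 1)
  congr! 3 with n
  exact Real.log_div (hfpos (n + 2) (by lia) x hx).ne' (hfpos (n + 1) (by lia) _ (hT hx)).ne'

end Log

theorem stmt_3_general {α : Type*} {T : α → α} {X : Set α} (hT : Set.MapsTo T X X)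
    {f : ℕ → α → ℝ} (hfpos : ∀ n : ℕ, 1 ≤ n → ∀ x ∈ X, 0 < f n x)
    (hbdd : BddBelow ((fun z ↦ Real.log (f 1 z)) '' X)) {C : ℝ}
    (hsup : ∀ x ∈ X, ∀ n m : ℕ, 1 ≤ n → 1 ≤ m →
      Real.exp (-C) * (f n x * f m (T^[n] x)) ≤ f (n + m) x)
    {fupp : α → EReal}
    (hfupp : ∀ x ∈ X, fupp x =
      limsup (fun n : ℕ ↦ ((Real.log (f (n + 2) x / f (n + 1) (T x))) : EReal)) atTop) :
    (∀ x ∈ X, ((-C + sInf ((fun z ↦ Real.log (f 1 z)) '' X) : ℝ) : EReal) ≤ fupp x) ∧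
    (∀ x ∈ X, ∀ m : ℕ, 1 ≤ m →
      ((-C + Real.log (f m x) : ℝ) : EReal) ≤ birkhoffSum T fupp m x) := by
  have hlog := almostSuperadditiveOn_log hT hfpos hsup
  have hfupp_eq : ∀ x ∈ X, fupp x = upperIncrement T (fun n z ↦ Real.log (f n z)) x :=
    fun x hx ↦ (hfupp x hx).trans (limsup_log_div_eq_upperIncrement hT hfpos hx)
  refine ⟨fun x hx ↦ ?_, fun x hx m hm ↦ ?_⟩
  · have hinf : sInf ((fun z ↦ Real.log (f 1 z)) '' X) ≤ Real.log (f 1 x) :=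
      csInf_le hbdd (Set.mem_image_of_mem _ hx)
    rw [hfupp_eq x hx]
    exact (EReal.coe_le_coe (by gcongr)).trans (hlog.le_upperIncrement hx)
  · have hsum : birkhoffSum T fupp m x = birkhoffSum T (upperIncrement T _) m x :=
      Finset.sum_congr rfl fun i _ ↦ hfupp_eq _ (hT.iterate i hx)
    exact (hlog.le_birkhoffSum_upperIncrement hT hx hm).trans_eq hsum.symm

/-- Lemma `prego1` (ii): for a sequence satisfying the
superadditivity-type bound, `f̄ = limsup log (f_n / f_{n-1} ∘ σ)` is bounded below by
`−C + min_{x ∈ X} log f_1`, and `(S_k f̄)(x) ≥ −C + log f_k(x)` (in the extended reals). -/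
theorem stmt_3 {k : ℕ} (X : Set (ℕ → Fin k))
    (hX : IsSubshift X) (hspec : WeakSpec X)
    (f : ℕ → (ℕ → Fin k) → ℝ)
    (hfc : ∀ n : ℕ, 1 ≤ n → ContinuousOn (f n) X)
    (hfpos : ∀ n : ℕ, 1 ≤ n → ∀ x ∈ X, 0 < f n x)
    (C : ℝ) (hC : 0 < C)
    (hsup : ∀ x ∈ X, ∀ n m : ℕ, 1 ≤ n → 1 ≤ m →
      Real.exp (-C) * (f n x * f m (shift^[n] x)) ≤ f (n + m) x)
    (fupp : (ℕ → Fin k) → EReal)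
    (hfupp : ∀ x ∈ X,
      fupp x = Filter.limsup
        (fun n : ℕ => ((Real.log (f (n + 2) x / f (n + 1) (shift x))) : EReal)) atTop) :
    (∀ x ∈ X, ((-C + sInf ((fun z => Real.log (f 1 z)) '' X) : ℝ) : EReal) ≤ fupp x) ∧
    (∀ x ∈ X, ∀ m : ℕ, 1 ≤ m →
      ((-C + Real.log (f m x) : ℝ) : EReal) ≤ ∑ i ∈ Finset.range m, fupp (shift^[i] x)) := by
  have hbdd : BddBelow ((fun z => Real.log (f 1 z)) '' X) :=
    hX.1.isCompact.bddBelow_image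
      ((hfc 1 le_rfl).log fun z hz => (hfpos 1 le_rfl z hz).ne')
  exact stmt_3_general (Set.mapsTo_iff_image_subset.2 hX.2) hfpos hbdd hsup hfupp
end
end

section
/- Let (X, σ_X) be a one-sided subshift with the weak specification property and 𝓕 = {log f_n} an almost additive sequence of continuous functions on X. Suppose that for every x ∈ X the limit f̂(x) := lim_{n→∞} log(f_n(x)/f_{n-1}(σ_X x)) exists in ℝ. Then f̂ is a bounded Borel measurable function on X, lim_{n→∞} (1/n) sup_{x∈X} |log f_n(x) − (S_n f̂)(x)| = 0, and for every m ∈ M(X, σ_X), lim_{n→∞} (1/n) ∫ log f_n dm = ∫ f̂ dm. -/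
open MeasureTheory Filter Topology

noncomputable section

/-- The sequence `{log f_n}` is almost additive on `X` with constant `C`. -/
def AAOn {A : Type*} (X : Set (ℕ → A)) (f : ℕ → (ℕ → A) → ℝ) (C : ℝ) : Prop :=
  ∀ x ∈ X, ∀ n m : ℕ, 1 ≤ n → 1 ≤ m →
    Real.exp (-C) * (f n x * f m (shift^[n] x)) ≤ f (n + m) x ∧
    f (n + m) x ≤ Real.exp C * (f n x * f m (shift^[n] x))

/-- The sequence `{log f_n}` is weakly almost additive on `X`. -/
def WeakAAOn {A : Type*} (X : Set (ℕ → A)) (f : ℕ → (ℕ → A) → ℝ) : Prop :=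
  ∃ C : ℕ → ℝ, (∀ n : ℕ, 1 ≤ n → 0 < C n) ∧
    Tendsto (fun n : ℕ => C n / n) atTop (𝓝 0) ∧
    ∀ x ∈ X, ∀ n m : ℕ, 1 ≤ n → 1 ≤ m →
      Real.exp (-(C n)) * (f n x * f m (shift^[n] x)) ≤ f (n + m) x ∧
      f (n + m) x ≤ Real.exp (C n) * (f n x * f m (shift^[n] x))

/-! Write `T` for the shift, `φ n = log f_n` and `g = f̂`. Summing the increments
`φ (N + 1) y - φ N (T y) → g y` along the first `n` points `y` of the orbit of `x` telescopes to
`φ (n + N) x - φ N (T^[n] x) → S_n g x` as `N → ∞`. Almost additivity keeps the left-hand side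
within `C` of `φ n x` for every `N`, so `|φ n x - S_n g x| ≤ C`. With `n = 1` this bounds `g`;
dividing by `n` gives the uniform limit, and integrating against an invariant measure, for which
`∫ S_n g = n ∫ g`, gives the last one. -/

section Telescoping

variable {α E : Type*} {T : α → α} {X : Set α} {φ : ℕ → α → E} {g : α → E}

lemma tendsto_sub_iterate_birkhoffSum [AddCommGroup E] [TopologicalSpace E] [ContinuousAdd E]
    (hT : Set.MapsTo T X X)
    (hlim : ∀ x ∈ X, Tendsto (fun N => φ (N + 1) x - φ N (T x)) atTop (𝓝 (g x)))
    (n : ℕ) {x : α} (hx : x ∈ X) :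
    Tendsto (fun N => φ (n + N) x - φ N (T^[n] x)) atTop (𝓝 (birkhoffSum T g n x)) := by
  induction n with
  | zero => simp [tendsto_const_nhds]
  | succ n ih =>
    rw [birkhoffSum_succ]
    refine ((ih.comp (tendsto_add_atTop_nat 1)).add (hlim _ (hT.iterate n hx))).congr fun N => ?_
    simp only [Function.comp_apply, Function.iterate_succ_apply']
    rw [sub_add_sub_cancel, add_right_comm n 1 N, add_assoc]

lemma norm_sub_birkhoffSum_le [SeminormedAddCommGroup E] (hT : Set.MapsTo T X X)
    (hlim : ∀ x ∈ X, Tendsto (fun N => φ (N + 1) x - φ N (T x)) atTop (𝓝 (g x)))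
    {n : ℕ} {x : α} (hx : x ∈ X) {c : ℝ}
    (hφ : ∀ᶠ N in atTop, ‖φ (n + N) x - (φ n x + φ N (T^[n] x))‖ ≤ c) :
    ‖φ n x - birkhoffSum T g n x‖ ≤ c := by
  refine le_of_tendsto ((tendsto_sub_iterate_birkhoffSum hT hlim n hx).const_sub _).norm ?_
  filter_upwards [hφ] with N hN
  rwa [← norm_neg, neg_sub, sub_sub, add_comm (φ N _)]

end Telescoping

lemma measurable_restrict_of_tendsto_sub {α E : Type*} [TopologicalSpace α] [MeasurableSpace α]
    [OpensMeasurableSpace α] [Sub E] [TopologicalSpace E] [ContinuousSub E]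
    [TopologicalSpace.PseudoMetrizableSpace E] [MeasurableSpace E] [BorelSpace E]
    {T : α → α} {X : Set α} {φ : ℕ → α → E} {g : α → E}
    (hT : ContinuousOn T X) (hTX : Set.MapsTo T X X)
    (hφ : ∀ n, 1 ≤ n → ContinuousOn (φ n) X)
    (hlim : ∀ x ∈ X, Tendsto (fun N => φ (N + 1) x - φ N (T x)) atTop (𝓝 (g x))) :
    Measurable (fun x : X => g x) := by
  have hcont (n : ℕ) : Continuous fun x : X => φ (n + 2) x - φ (n + 1) (T x) :=
    continuousOn_iff_continuous_domRestrict.mp <|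
      (hφ (n + 2) (by omega)).sub ((hφ (n + 1) (by omega)).comp hT hTX)
  refine measurable_of_tendsto_metrizable (fun n => (hcont n).measurable) ?_
  exact tendsto_pi_nhds.mpr fun x => (hlim x x.2).comp (tendsto_add_atTop_nat 1)

lemma exists_norm_le_of_norm_sub_le {α E : Type*} [TopologicalSpace α] [SeminormedAddCommGroup E]
    {X : Set α} (hX : IsCompact X) {ψ g : α → E} (hψ : ContinuousOn ψ X) {c : ℝ}
    (hψg : ∀ x ∈ X, ‖ψ x - g x‖ ≤ c) : ∃ B : ℝ, ∀ x ∈ X, ‖g x‖ ≤ B := by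
  obtain ⟨B, hB⟩ := hX.exists_bound_of_continuousOn hψ
  refine ⟨B + c, fun x hx => ?_⟩
  calc ‖g x‖ = ‖ψ x - (ψ x - g x)‖ := by rw [sub_sub_cancel]
    _ ≤ ‖ψ x‖ + ‖ψ x - g x‖ := norm_sub_le _ _
    _ ≤ B + c := add_le_add (hB x hx) (hψg x hx)

lemma tendsto_one_div_mul_iSup_norm_of_norm_le {ι E : Type*} [SeminormedAddCommGroup E]
    {D : ℕ → ι → E} {C : ℕ → ℝ} (hC : Tendsto (fun n : ℕ => C n / n) atTop (𝓝 0))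
    (hD : ∀ᶠ n in atTop, ∀ i, ‖D n i‖ ≤ C n) :
    Tendsto (fun n : ℕ => (1 / (n : ℝ)) * ⨆ i, ‖D n i‖) atTop (𝓝 0) := by
  have hCabs : Tendsto (fun n : ℕ => |C n| / n) atTop (𝓝 0) := by
    simpa [abs_div] using hC.abs
  refine squeeze_zero' (.of_forall fun n => ?_) ?_ hCabs
  · exact mul_nonneg (by positivity) (Real.iSup_nonneg fun i => norm_nonneg _)
  · filter_upwards [hD] with n hn
    rw [one_div_mul_eq_div]
    gcongr
    exact Real.iSup_le (fun i => (hn i).trans (le_abs_self _)) (abs_nonneg _)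

lemma aemeasurable_of_measurable_subtype {α β : Type*} [MeasurableSpace α] [MeasurableSpace β]
    {μ : Measure α} {X : Set α} (hX : MeasurableSet X) (hμX : ∀ᵐ x ∂μ, x ∈ X) {ψ : α → β}
    (hψ : Measurable fun x : X => ψ x) : AEMeasurable ψ μ := by
  rw [← Measure.restrict_eq_self_of_ae_mem hμX]
  exact aemeasurable_restrict_of_measurable_subtype hX hψ

section Integral

variable {α E : Type*} [MeasurableSpace α] {μ : Measure α} {T : α → α}
  [NormedAddCommGroup E] {g : α → E}

lemma integrable_birkhoffSum (hT : MeasurePreserving T μ μ) (hg : Integrable g μ) (n : ℕ) :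
    Integrable (birkhoffSum T g n) μ :=
  integrable_finsetSum _ fun i _ => (hT.iterate i).integrable_comp_of_integrable hg

variable [NormedSpace ℝ E]

lemma integral_birkhoffSum (hT : MeasurePreserving T μ μ) (hg : Integrable g μ) (n : ℕ) :
    ∫ x, birkhoffSum T g n x ∂μ = n • ∫ x, g x ∂μ := by
  have hiter (i : ℕ) : ∫ x, g (T^[i] x) ∂μ = ∫ x, g x ∂μ := by
    have hi := hT.iterate i
    rw [← integral_map hi.aemeasurable (by rw [hi.map_eq]; exact hg.aestronglyMeasurable),
      hi.map_eq]
  calc ∫ x, birkhoffSum T g n x ∂μ = ∑ i ∈ Finset.range n, ∫ x, g (T^[i] x) ∂μ :=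
        integral_finsetSum _ fun i _ => (hT.iterate i).integrable_comp_of_integrable hg
    _ = n • ∫ x, g x ∂μ := by simp [hiter]

lemma norm_integral_sub_nsmul_integral_le [IsFiniteMeasure μ] (hT : MeasurePreserving T μ μ)
    (hg : Integrable g μ) {ψ : α → E} (hψ : AEStronglyMeasurable ψ μ) {n : ℕ} {c : ℝ}
    (hψg : ∀ᵐ x ∂μ, ‖ψ x - birkhoffSum T g n x‖ ≤ c) :
    ‖∫ x, ψ x ∂μ - n • ∫ x, g x ∂μ‖ ≤ c * μ.real Set.univ := by
  have hS : Integrable (birkhoffSum T g n) μ := integrable_birkhoffSum hT hg n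
  have hψint : Integrable ψ μ := by
    simpa using (Integrable.of_bound (hψ.sub hS.aestronglyMeasurable) c hψg).add hS
  rw [← integral_birkhoffSum hT hg, ← integral_sub hψint hS]
  exact norm_integral_le_of_norm_le_const hψg

lemma tendsto_one_div_smul_integral_of_norm_sub_birkhoffSum_le [IsFiniteMeasure μ]
    (hT : MeasurePreserving T μ μ) (hg : Integrable g μ) {φ : ℕ → α → E} {C : ℕ → ℝ}
    (hC : Tendsto (fun n : ℕ => C n / n) atTop (𝓝 0))
    (hφ : ∀ᶠ n in atTop, AEStronglyMeasurable (φ n) μ)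
    (hφg : ∀ᶠ n in atTop, ∀ᵐ x ∂μ, ‖φ n x - birkhoffSum T g n x‖ ≤ C n) :
    Tendsto (fun n : ℕ => (1 / (n : ℝ)) • ∫ x, φ n x ∂μ) atTop (𝓝 (∫ x, g x ∂μ)) := by
  rw [tendsto_iff_norm_sub_tendsto_zero]
  have hCμ : Tendsto (fun n : ℕ => C n / n * μ.real Set.univ) atTop (𝓝 0) := by
    simpa using hC.mul_const (μ.real Set.univ)
  refine squeeze_zero' (.of_forall fun n => norm_nonneg _) ?_ hCμ
  filter_upwards [hφ, hφg, eventually_ne_atTop 0] with n hφn hφgn hn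
  have hn' : (n : ℝ) ≠ 0 := Nat.cast_ne_zero.mpr hn
  calc ‖(1 / (n : ℝ)) • ∫ x, φ n x ∂μ - ∫ x, g x ∂μ‖
      = ‖(1 / (n : ℝ)) • (∫ x, φ n x ∂μ - n • ∫ x, g x ∂μ)‖ := by
        rw [smul_sub, ← Nat.cast_smul_eq_nsmul ℝ, smul_smul, one_div_mul_cancel hn', one_smul]
    _ = 1 / n * ‖∫ x, φ n x ∂μ - n • ∫ x, g x ∂μ‖ := by
        rw [norm_smul, Real.norm_of_nonneg (by positivity)]
    _ ≤ 1 / n * (C n * μ.real Set.univ) := by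
        gcongr
        exact norm_integral_sub_nsmul_integral_le hT hg hφn hφgn
    _ = C n / n * μ.real Set.univ := by ring

end Integral

lemma abs_log_sub_add_log_le {a b c C : ℝ} (ha : 0 < a) (hb : 0 < b)
    (hlower : Real.exp (-C) * (a * b) ≤ c) (hupper : c ≤ Real.exp C * (a * b)) :
    |Real.log c - (Real.log a + Real.log b)| ≤ C := by
  have hc : 0 < c := lt_of_lt_of_le (by positivity) hlower
  have hlog_mul (s : ℝ) :
      Real.log (Real.exp s * (a * b)) = s + (Real.log a + Real.log b) := by
    rw [Real.log_mul (Real.exp_ne_zero s) (by positivity), Real.log_exp,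
      Real.log_mul ha.ne' hb.ne']
  have hlog_lower := Real.log_le_log (by positivity) hlower
  have hlog_upper := Real.log_le_log hc hupper
  rw [hlog_mul] at hlog_lower hlog_upper
  rw [abs_le]
  constructor <;> linarith

theorem stmt_4_general {α : Type*} [TopologicalSpace α] [T2Space α] [MeasurableSpace α]
    [OpensMeasurableSpace α] {T : α → α} {X : Set α} (hX : IsCompact X)
    (hT : ContinuousOn T X) (hTX : Set.MapsTo T X X) {f : ℕ → α → ℝ}
    (hfc : ∀ n, 1 ≤ n → ContinuousOn (f n) X) (hfpos : ∀ n, 1 ≤ n → ∀ x ∈ X, 0 < f n x)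
    {C : ℕ → ℝ} (hC : Tendsto (fun n : ℕ => C n / n) atTop (𝓝 0))
    (hf : ∀ x ∈ X, ∀ n m : ℕ, 1 ≤ n → 1 ≤ m →
      Real.exp (-C n) * (f n x * f m (T^[n] x)) ≤ f (n + m) x ∧
      f (n + m) x ≤ Real.exp (C n) * (f n x * f m (T^[n] x)))
    {g : α → ℝ}
    (hlim : ∀ x ∈ X, Tendsto
      (fun n : ℕ => Real.log (f (n + 2) x / f (n + 1) (T x))) atTop (𝓝 (g x))) :
    Measurable (fun x : X => g x) ∧
    (∃ B : ℝ, ∀ x ∈ X, |g x| ≤ B) ∧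
    Tendsto (fun n : ℕ =>
      (1 / (n : ℝ)) * ⨆ x : X, |Real.log (f n x) - birkhoffSum T g n x|) atTop (𝓝 0) ∧
    ∀ (μ : Measure α) [IsFiniteMeasure μ], (∀ᵐ x ∂μ, x ∈ X) → MeasurePreserving T μ μ →
      Tendsto (fun n : ℕ => (1 / (n : ℝ)) * ∫ x, Real.log (f n x) ∂μ) atTop
        (𝓝 (∫ x, g x ∂μ)) := by
  have hlogc (n : ℕ) (hn : 1 ≤ n) : ContinuousOn (fun x => Real.log (f n x)) X :=
    (hfc n hn).log fun x hx => (hfpos n hn x hx).ne'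
  have hincr (x : α) (hx : x ∈ X) : Tendsto
      (fun N => Real.log (f (N + 1) x) - Real.log (f N (T x))) atTop (𝓝 (g x)) := by
    refine (tendsto_add_atTop_iff_nat 1).mp ((hlim x hx).congr fun N => ?_)
    exact Real.log_div (hfpos _ (by omega) x hx).ne' (hfpos _ (by omega) _ (hTX hx)).ne'
  have hclose (n : ℕ) (hn : 1 ≤ n) (x : α) (hx : x ∈ X) :
      |Real.log (f n x) - birkhoffSum T g n x| ≤ C n := by
    refine norm_sub_birkhoffSum_le (φ := fun n x => Real.log (f n x)) hTX hincr hx ?_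
    filter_upwards [eventually_ge_atTop 1] with N hN
    exact abs_log_sub_add_log_le (hfpos n hn x hx) (hfpos N hN _ (hTX.iterate n hx))
      (hf x hx n N hn hN).1 (hf x hx n N hn hN).2
  have hmeas : Measurable (fun x : X => g x) :=
    measurable_restrict_of_tendsto_sub (φ := fun n x => Real.log (f n x)) hT hTX hlogc hincr
  have hbdd : ∃ B : ℝ, ∀ x ∈ X, |g x| ≤ B := by
    refine exists_norm_le_of_norm_sub_le hX (hlogc 1 le_rfl) (c := C 1) fun x hx => ?_
    simpa using hclose 1 le_rfl x hx
  refine ⟨hmeas, hbdd, ?_, fun μ _ hμX hμT => ?_⟩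
  · refine tendsto_one_div_mul_iSup_norm_of_norm_le
      (D := fun n (x : X) => Real.log (f n x) - birkhoffSum T g n x) hC ?_
    filter_upwards [eventually_ge_atTop 1] with n hn x using hclose n hn x x.2
  · obtain ⟨B, hB⟩ := hbdd
    have haemeas {ψ : α → ℝ} (hψ : Measurable fun x : X => ψ x) : AEStronglyMeasurable ψ μ :=
      (aemeasurable_of_measurable_subtype hX.measurableSet hμX hψ).aestronglyMeasurable
    have hg : Integrable g μ := .of_bound (haemeas hmeas) B (hμX.mono hB)
    refine tendsto_one_div_smul_integral_of_norm_sub_birkhoffSum_le hμT hg hC ?_ ?_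
    · filter_upwards [eventually_ge_atTop 1] with n hn
      exact haemeas (hlogc n hn).domRestrict.measurable
    · filter_upwards [eventually_ge_atTop 1] with n hn using hμX.mono (hclose n hn)

lemma continuous_shift {A : Type*} [TopologicalSpace A] : Continuous (shift (A := A)) :=
  continuous_pi fun i => continuous_apply (i + 1)

lemma IsInvariantOn.measurePreserving_shift {A : Type*} [MeasurableSpace A]
    {μ : Measure (ℕ → A)} {X : Set (ℕ → A)} (hμ : IsInvariantOn μ X) :
    MeasurePreserving shift μ μ := by
  have hshift : Measurable (shift (A := A)) :=
    measurable_pi_lambda _ fun i => measurable_pi_apply (i + 1)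
  refine ⟨hshift, Measure.ext fun B hB => ?_⟩
  rw [Measure.map_apply hshift hB, hμ.2.2 B hB]

/-- Theorem `go1` (i), first part: if `𝓕` is almost additive and
`f̂(x) = lim log (f_n(x)/f_{n-1}(σ x))` exists everywhere, then `f̂` is bounded and Borel
measurable, `(1/n)‖log f_n − S_n f̂‖_∞ → 0`, and `(1/n)∫ log f_n dm → ∫ f̂ dm` for every
invariant measure `m`. -/
theorem stmt_4 {k : ℕ} (X : Set (ℕ → Fin k))
    (hX : IsSubshift X) (hspec : WeakSpec X)
    (f : ℕ → (ℕ → Fin k) → ℝ)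
    (hfc : ∀ n : ℕ, 1 ≤ n → ContinuousOn (f n) X)
    (hfpos : ∀ n : ℕ, 1 ≤ n → ∀ x ∈ X, 0 < f n x)
    (hAA : ∃ C : ℝ, 0 < C ∧ AAOn X f C)
    (fhat : (ℕ → Fin k) → ℝ)
    (hlim : ∀ x ∈ X, Tendsto
      (fun n : ℕ => Real.log (f (n + 2) x / f (n + 1) (shift x))) atTop (𝓝 (fhat x))) :
    Measurable (fun x : X => fhat ↑x) ∧
    (∃ B : ℝ, ∀ x ∈ X, |fhat x| ≤ B) ∧
    Tendsto (fun n : ℕ =>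
      (1 / (n : ℝ)) * ⨆ x : X, |Real.log (f n ↑x) - birk fhat n ↑x|) atTop (𝓝 0) ∧
    ∀ m : Measure (ℕ → Fin k), IsInvariantOn m X →
      Tendsto (fun n : ℕ => (1 / (n : ℝ)) * ∫ x, Real.log (f n x) ∂m) atTop
        (𝓝 (∫ x, fhat x ∂m)) := by
  obtain ⟨C, -, hAA⟩ := hAA
  obtain ⟨hmeas, hbdd, hunif, hint⟩ := stmt_4_general hX.1.isCompact continuous_shift.continuousOn
    (Set.mapsTo_iff_image_subset.mpr hX.2) hfc hfpos (tendsto_const_div_atTop_nhds_zero_nat C)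
    hAA hlim
  refine ⟨hmeas, hbdd, hunif, fun m hm => ?_⟩
  have := hm.1
  exact hint m ((mem_ae_iff_prob_eq_one hX.1.measurableSet).mpr hm.2.1) hm.measurePreserving_shift
end
end

section
/- Assume Setting (C). Suppose M_{22}|_{π^{-1}(22)} = [[0, a₁],[a₁, 0]] for some a₁ > 0, and suppose that M(2,1) = M(3,1) or M(1,2) = M(1,3). Then for every y ∈ Y the limit ĥ(y) := lim_{n→∞} log(h_n(y)/h_{n-1}(σ_Y y)) exists in ℝ, and the function ĥ is continuous on Y. In particular, if f = 0 then ĥ is continuous on Y. -/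
open MeasureTheory Filter Topology

noncomputable section

open scoped Classical

/-- `g_n(y) = sup_{E_n(y)} Σ_{x ∈ E_n(y)} e^{(S_n f)(x)}`: the sum, over all `n`-blocks
of `X` projecting to `y_1…y_n`, of the sup of `e^{S_n f}` over the corresponding
cylinder. -/
noncomputable def gseq {kX kY : ℕ} (X : Set (ℕ → Fin kX)) (πs : Fin kX → Fin kY)
    (f : (ℕ → Fin kX) → ℝ) (n : ℕ) (y : ℕ → Fin kY) : ℝ :=
  ∑ u : Fin n → Fin kX,
    if ((∃ x ∈ X, ∀ i : Fin n, x ↑i = u i) ∧ ∀ i : Fin n, πs (u i) = y ↑i) then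
      ⨆ x : ↥{z ∈ X | ∀ i : Fin n, z ↑i = u i}, Real.exp (birk f n ↑x)
    else 0

/-- `h_n(y) = sup_{E_n(y)} Σ_{x ∈ E_n(y)} e^{(S_{n-1} f)(x)}` for `n ≥ 2`, and
`h_1 = g_1`. -/
noncomputable def hseqS {kX kY : ℕ} (X : Set (ℕ → Fin kX)) (πs : Fin kX → Fin kY)
    (f : (ℕ → Fin kX) → ℝ) (n : ℕ) (y : ℕ → Fin kY) : ℝ :=
  if n ≤ 1 then gseq X πs f n y
  else
    ∑ u : Fin n → Fin kX,
      if ((∃ x ∈ X, ∀ i : Fin n, x ↑i = u i) ∧ ∀ i : Fin n, πs (u i) = y ↑i) then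
        ⨆ x : ↥{z ∈ X | ∀ i : Fin n, z ↑i = u i}, Real.exp (birk f (n - 1) ↑x)
      else 0

/-- Irreducibility of a subshift: any two words appearing in `X` can be connected. -/
def IrreducibleShift {A : Type*} (X : Set (ℕ → A)) : Prop :=
  ∀ u v : List A, AppearsIn X u → AppearsIn X v →
    ∃ w : List A, AppearsIn X (u ++ w ++ v)

/-- For a factor map collapsing all symbols except `0`, and a two-coordinate potential
given by `F`: `h_n(y)` is the sum over `n`-blocks `x_1…x_n` of `X` with
`π(x_1)…π(x_n) = y_1…y_n` of `e^{F(x_1,x_2)+⋯+F(x_{n-1},x_n)}` (for `n ≥ 2`), and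
`h_1(y) = Σ_{a : π(a) = y_1} sup_{x ∈ [a]} e^{f(x)}`. -/
noncomputable def hseqC {l : ℕ} (X : Set (ℕ → Fin l)) (πs : Fin l → Fin 2)
    (F : Fin l → Fin l → ℝ) (f : (ℕ → Fin l) → ℝ) (n : ℕ) (y : ℕ → Fin 2) : ℝ :=
  if n ≤ 1 then
    ∑ a : Fin l,
      if πs a = y 0 then (⨆ x : ↥{z ∈ X | z 0 = a}, Real.exp (f ↑x)) else 0
  else
    ∑ u : Fin n → Fin l,
      if ((∃ x ∈ X, ∀ i : Fin n, x ↑i = u i) ∧ ∀ i : Fin n, πs (u i) = y ↑i) then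
        Real.exp (∑ i : Fin n,
          if h : (↑i + 1 : ℕ) < n then F (u i) (u ⟨↑i + 1, h⟩) else 0)
      else 0

/-- The one-block map of Setting (C): symbol `1` (here `0`) goes to `1` (here `0`),
symbols `2, 3` (here `1, 2`) go to `2` (here `1`). -/
def projC {l : ℕ} : Fin l → Fin 2 := fun a => if (a : ℕ) = 0 then 0 else 1

/-- The matrix `M(i,j) = e^{f[ij]} a_{ij}` of Setting (C). -/
noncomputable def MC {l : ℕ} (A : Fin l → Fin l → ℕ) (F : Fin l → Fin l → ℝ) :
    Fin l → Fin l → ℝ := fun i j => Real.exp (F i j) * (A i j : ℝ)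

/-- Similarity of `2 × 2` real matrices. -/
def Similar2 (M N : Matrix (Fin 2) (Fin 2) ℝ) : Prop :=
  ∃ P : Matrix (Fin 2) (Fin 2) ℝ, IsUnit P.det ∧ N = P⁻¹ * M * P

/-!
Give a word the product of the weights `M` along its transitions. Then `h_n(y)` is the total weight
of the words over `y_1 … y_n` whose last symbol starts a point of `X`, and splitting off the first
symbol writes it through the `(y_1, y_2)` block of `M` and the vector of continuation weights on the
fibre of `y_2`. If the column sums of the block are constant, or if the vector is, then summing over
the fibre of `y_1` multiplies the total weight by the block's entry sum divided by the size of the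
fibre of `y_2`. The vector is constant on fibres as soon as the row sums of all blocks are. Hence
`h_n(y) / h_{n-1}(σ y)` depends only on `y_1 y_2` once `n ≥ 3`.

For `M_{22} = [[0, a₁], [a₁, 0]]`, the condition `M(2,1) = M(3,1)` makes all row sums constant and
`M(1,2) = M(1,3)` makes all column sums constant.
-/

section WordWeight

variable {S T R : Type*} [CommSemiring R]

/-- The weight of the word `u_0 … u_n`: the product of the transition weights `M`, times the weight
`e` of the last symbol. -/
def wordWeight (M : S → S → R) (e : S → R) {n : ℕ} (u : Fin (n + 1) → S) : R :=
  (∏ k : Fin n, M (u k.castSucc) (u k.succ)) * e (u (Fin.last n))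

lemma wordWeight_cons (M : S → S → R) (e : S → R) {n : ℕ} (i : S) (u : Fin (n + 1) → S) :
    wordWeight M e (Fin.cons i u : Fin (n + 2) → S) = M i (u 0) * wordWeight M e u := by
  simp [wordWeight, Fin.prod_univ_succ, ← Fin.succ_last, mul_assoc]

variable [Fintype S] [DecidableEq T]

/-- The words `u_0 … u_{n-1}` with `u_k` in the fibre of `y_k`. -/
def wordsOver (π : S → T) (y : ℕ → T) (n : ℕ) : Finset (Fin n → S) :=
  {u | ∀ k : Fin n, π (u k) = y k}

lemma mem_wordsOver {π : S → T} {y : ℕ → T} {n : ℕ} {u : Fin n → S} :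
    u ∈ wordsOver π y n ↔ ∀ k : Fin n, π (u k) = y k := by
  simp [wordsOver]

lemma sum_wordsOver_succ {B : Type*} [AddCommMonoid B] (π : S → T) (y : ℕ → T) {n : ℕ}
    (φ : (Fin (n + 1) → S) → B) :
    ∑ u ∈ wordsOver π y (n + 1), φ u =
      ∑ i with π i = y 0, ∑ u ∈ wordsOver π (shift y) n, φ (Fin.cons i u) := by
  rw [← Finset.sum_product']
  refine (Finset.sum_equiv (Fin.consEquiv fun _ : Fin (n + 1) => S) (fun p => ?_) ?_).symm
  · simp [mem_wordsOver, Fin.forall_fin_succ, shift, Fin.consEquiv]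
  · simp [Fin.consEquiv]

/-- The total weight of the words `i u_1 … u_n` with `u_k` in the fibre of `y_k`; the symbol `i`
itself is not required to lie over `y_0`. -/
def continuationWeight (π : S → T) (M : S → S → R) (e : S → R) : ℕ → (ℕ → T) → S → R
  | 0, _, i => e i
  | n + 1, y, i => ∑ j with π j = y 1, M i j * continuationWeight π M e n (shift y) j

lemma sum_mul_wordWeight (π : S → T) (M : S → S → R) (e g : S → R) (n : ℕ) (y : ℕ → T) :
    ∑ u ∈ wordsOver π y (n + 1), g (u 0) * wordWeight M e u =
      ∑ i with π i = y 0, g i * continuationWeight π M e n y i := by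
  induction n generalizing y g with
  | zero =>
    rw [sum_wordsOver_succ]
    simp [wordsOver, wordWeight, continuationWeight]
  | succ n ih =>
    rw [sum_wordsOver_succ]
    simp only [Fin.cons_zero, wordWeight_cons, ← Finset.mul_sum, ih]
    rfl

lemma sum_wordWeight (π : S → T) (M : S → S → R) (e : S → R) (n : ℕ) (y : ℕ → T) :
    ∑ u ∈ wordsOver π y (n + 1), wordWeight M e u =
      ∑ i with π i = y 0, continuationWeight π M e n y i := by
  simpa using sum_mul_wordWeight π M e 1 n y

end WordWeight

section Lumpable

variable {S T R K : Type*} [Fintype S] [DecidableEq T]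

/-- Ordinary lumpability of `M` along `π`, as for Markov chains: within each block
`π⁻¹{a} × π⁻¹{b}` of `M`, all row sums are equal. -/
def OrdinarilyLumpable [AddCommMonoid R] (π : S → T) (M : S → S → R) : Prop :=
  ∀ b, (fun i => ∑ j with π j = b, M i j).FactorsThrough π

/-- Exact lumpability of `M` along `π`, as for Markov chains: within each block
`π⁻¹{a} × π⁻¹{b}` of `M`, all column sums are equal. -/
def ExactlyLumpable [AddCommMonoid R] (π : S → T) (M : S → S → R) : Prop :=
  ∀ a, (fun j => ∑ i with π i = a, M i j).FactorsThrough π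

lemma OrdinarilyLumpable.continuationWeight_factorsThrough [CommSemiring R] {π : S → T}
    {M : S → S → R} (hM : OrdinarilyLumpable π M) {e : S → R} (he : e.FactorsThrough π)
    (n : ℕ) (y : ℕ → T) :
    (continuationWeight π M e n y).FactorsThrough π := by
  induction n generalizing y with
  | zero => exact he
  | succ n ih =>
    intro i i' hi
    obtain ⟨w, hw⟩ := (Function.factorsThrough_iff _).1 (ih (shift y))
    have eq_rowSum_mul (s : S) : continuationWeight π M e (n + 1) y s =
        (∑ j with π j = y 1, M s j) * w (y 1) := by
      rw [continuationWeight, Finset.sum_mul]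
      exact Finset.sum_congr rfl fun j hj => by simp [hw, (Finset.mem_filter.1 hj).2]
    rw [eq_rowSum_mul, eq_rowSum_mul]
    exact congrArg (· * w (y 1)) (hM (y 1) hi)

variable [Field K]

/-- The average column sum of the `(a, b)` block of `M`. It will be the factor by which prefixing
`a` to a word starting with `b` multiplies the total weight. It is `0` if the fibre of `b` is
empty. -/
def averageColSum (π : S → T) (M : S → S → K) (a b : T) : K :=
  (∑ i with π i = a, ∑ j with π j = b, M i j) / (Finset.univ.filter (π · = b)).card

variable [CharZero K]

lemma averageColSum_eq_colSum {π : S → T} {M : S → S → K} (hM : ExactlyLumpable π M) (a : T)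
    (j : S) : averageColSum π M a (π j) = ∑ i with π i = a, M i j := by
  have hcard : ((Finset.univ.filter (π · = π j)).card : K) ≠ 0 :=
    Nat.cast_ne_zero.2 (Finset.card_ne_zero.2 ⟨j, by simp⟩)
  rw [averageColSum, Finset.sum_comm, div_eq_iff hcard, mul_comm, ← nsmul_eq_mul]
  exact Finset.sum_eq_card_nsmul fun j' hj' => hM a (Finset.mem_filter.1 hj').2

lemma sum_block_mul_of_exactlyLumpable {π : S → T} {M : S → S → K} (hM : ExactlyLumpable π M)
    (v : S → K) (a b : T) :
    ∑ i with π i = a, ∑ j with π j = b, M i j * v j =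
      averageColSum π M a b * ∑ j with π j = b, v j := by
  rw [Finset.sum_comm, Finset.mul_sum]
  refine Finset.sum_congr rfl fun j hj => ?_
  obtain rfl : π j = b := (Finset.mem_filter.1 hj).2
  rw [averageColSum_eq_colSum hM, Finset.sum_mul]

lemma sum_block_mul_of_factorsThrough {π : S → T} (M : S → S → K) {v : S → K}
    (hv : v.FactorsThrough π) (a b : T) :
    ∑ i with π i = a, ∑ j with π j = b, M i j * v j =
      averageColSum π M a b * ∑ j with π j = b, v j := by
  obtain ⟨w, rfl⟩ := (Function.factorsThrough_iff _).1 hv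
  have hw : ∀ j ∈ Finset.univ.filter (π · = b), w (π j) = w b := by simp +contextual
  rcases (Finset.univ.filter (π · = b)).eq_empty_or_nonempty with hb | hb
  · simp [hb]
  · have hcard : ((Finset.univ.filter (π · = b)).card : K) ≠ 0 :=
      Nat.cast_ne_zero.2 hb.card_ne_zero
    calc ∑ i with π i = a, ∑ j with π j = b, M i j * w (π j)
        = (∑ i with π i = a, ∑ j with π j = b, M i j) * w b := by
          simp only [Finset.sum_mul]
          exact Finset.sum_congr rfl fun i _ => Finset.sum_congr rfl fun j hj => by rw [hw j hj]
      _ = averageColSum π M a b * ∑ j with π j = b, w (π j) := by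
          rw [Finset.sum_congr rfl hw, Finset.sum_const, nsmul_eq_mul, averageColSum]
          field_simp

lemma sum_continuationWeight_succ {π : S → T} {M : S → S → K} {e : S → K}
    (h : OrdinarilyLumpable π M ∧ e.FactorsThrough π ∨ ExactlyLumpable π M) (n : ℕ) (y : ℕ → T) :
    ∑ i with π i = y 0, continuationWeight π M e (n + 1) y i =
      averageColSum π M (y 0) (y 1) *
        ∑ i with π i = y 1, continuationWeight π M e n (shift y) i := by
  rcases h with ⟨hM, he⟩ | hM
  · exact sum_block_mul_of_factorsThrough M (hM.continuationWeight_factorsThrough he n _) _ _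
  · exact sum_block_mul_of_exactlyLumpable hM _ _ _

end Lumpable

section MarkovShift

variable {S : Type*}

/-- The one-sided shift of finite type with transition matrix `A`; transitions are the entries equal
to `1`. -/
def markovShift (A : S → S → ℕ) : Set (ℕ → S) := {x | ∀ n, A (x n) (x (n + 1)) = 1}

/-- The symbols at which some point of `X` starts: the possible last symbols of blocks of a shift of
finite type, whose transition matrix may have zero rows. -/
def initialSymbols (X : Set (ℕ → S)) : Set S := (· 0) '' X

lemma shift_mem_markovShift {A : S → S → ℕ} {x : ℕ → S} (hx : x ∈ markovShift A) :
    shift x ∈ markovShift A :=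
  fun n => hx (n + 1)

lemma exists_mem_markovShift_extending_iff (A : S → S → ℕ) {n : ℕ} (u : Fin (n + 1) → S) :
    (∃ x ∈ markovShift A, ∀ k : Fin (n + 1), x k = u k) ↔
      (∀ k : Fin n, A (u k.castSucc) (u k.succ) = 1) ∧
        u (Fin.last n) ∈ initialSymbols (markovShift A) := by
  constructor
  · rintro ⟨x, hx, hxu⟩
    refine ⟨fun k => ?_, fun m => x (n + m), fun m => hx (n + m), hxu (Fin.last n)⟩
    simpa [← hxu] using hx k
  · induction n with
    | zero =>
      rintro ⟨-, x, hx, hx0⟩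
      exact ⟨x, hx, fun k => by simpa [Fin.fin_one_eq_zero k] using hx0⟩
    | succ n ih =>
      rintro ⟨hu, hlast⟩
      obtain ⟨x, hx, hxu⟩ := ih (Fin.tail u) ⟨fun k => hu k.succ, hlast⟩
      refine ⟨fun k => k.casesOn (u 0) x, fun k => ?_, Fin.cases rfl hxu⟩
      cases k with
      | zero => exact (congrArg (A (u 0)) (hxu 0)).trans (hu 0)
      | succ k => exact hx k

lemma sum_dite_succ_lt {R : Type*} [AddCommMonoid R] {n : ℕ} (F : S → S → R)
    (u : Fin (n + 1) → S) :
    (∑ k : Fin (n + 1), if h : (k + 1 : ℕ) < n + 1 then F (u k) (u ⟨k + 1, h⟩) else 0) =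
      ∑ k : Fin n, F (u k.castSucc) (u k.succ) := by
  simp [Fin.sum_univ_castSucc, Fin.succ]

section Potential

variable {T : Type*} [DecidableEq T] {l : ℕ} {A : Fin l → Fin l → ℕ}

lemma wordWeight_MC (hA01 : ∀ i j, A i j = 0 ∨ A i j = 1) (F : Fin l → Fin l → ℝ) {n : ℕ}
    (u : Fin (n + 1) → Fin l) :
    wordWeight (MC A F) ((initialSymbols (markovShift A)).indicator 1) u =
      if ∃ x ∈ markovShift A, ∀ k : Fin (n + 1), x k = u k then
        Real.exp (∑ k : Fin n, F (u k.castSucc) (u k.succ)) else 0 := by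
  simp only [exists_mem_markovShift_extending_iff]
  split_ifs with hu
  · simp [wordWeight, MC, Real.exp_sum, hu.1, hu.2]
  · rw [wordWeight, mul_eq_zero]
    rcases not_and_or.1 hu with hu | hu
    · obtain ⟨k, hk⟩ := not_forall.1 hu
      have hk0 := (hA01 _ _).resolve_right hk
      exact .inl (Finset.prod_eq_zero (Finset.mem_univ k) (by simp [MC, hk0]))
    · exact .inr (Set.indicator_of_notMem hu _)

lemma hseqC_add_two (hA01 : ∀ i j, A i j = 0 ∨ A i j = 1) (π : Fin l → Fin 2)
    (F : Fin l → Fin l → ℝ) (f : (ℕ → Fin l) → ℝ) (n : ℕ) (y : ℕ → Fin 2) :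
    hseqC (markovShift A) π F f (n + 2) y =
      ∑ i with π i = y 0, continuationWeight π (MC A F)
        ((initialSymbols (markovShift A)).indicator 1) (n + 1) y i := by
  rw [← sum_wordWeight, wordsOver, Finset.sum_filter, hseqC, if_neg (by lia)]
  refine Finset.sum_congr rfl fun u _ => ?_
  simp only [sum_dite_succ_lt, wordWeight_MC hA01, ← ite_and, and_comm]

lemma hseqC_add_two_pos {X : Set (ℕ → Fin l)} {x : ℕ → Fin l} (hx : x ∈ X) (π : Fin l → Fin 2)
    (F : Fin l → Fin l → ℝ) (f : (ℕ → Fin l) → ℝ) (n : ℕ) :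
    0 < hseqC X π F f (n + 2) (π ∘ x) := by
  rw [hseqC, if_neg (by lia)]
  refine Finset.sum_pos' (fun u _ => by positivity) ⟨fun k => x k, Finset.mem_univ _, ?_⟩
  rw [if_pos ⟨⟨x, hx, fun _ => rfl⟩, fun _ => rfl⟩]
  positivity

lemma OrdinarilyLumpable.exists_transition {π : Fin l → T} {F : Fin l → Fin l → ℝ}
    (hM : OrdinarilyLumpable π (MC A F)) (hA01 : ∀ i j, A i j = 0 ∨ A i j = 1) {s s' t : Fin l}
    (hst : A s t = 1) (hs : π s' = π s) : ∃ t', A s' t' = 1 ∧ π t' = π t := by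
  have hpos : 0 < ∑ j with π j = π t, MC A F s' j := by
    have hrow : ∑ j with π j = π t, MC A F s' j = ∑ j with π j = π t, MC A F s j := hM (π t) hs
    rw [hrow]
    refine Finset.sum_pos' (fun j _ => by unfold MC; positivity) ⟨t, by simp, ?_⟩
    simp [MC, hst, Real.exp_pos]
  obtain ⟨t', ht', hne⟩ := Finset.exists_ne_zero_of_sum_ne_zero hpos.ne'
  refine ⟨t', (hA01 s' t').resolve_left fun h0 => hne (by simp [MC, h0]), ?_⟩
  exact (Finset.mem_filter.1 ht').2

lemma OrdinarilyLumpable.mem_initialSymbols {π : Fin l → T} {F : Fin l → Fin l → ℝ}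
    (hM : OrdinarilyLumpable π (MC A F)) (hA01 : ∀ i j, A i j = 0 ∨ A i j = 1) {i i' : Fin l}
    (hi : π i' = π i) (h : i ∈ initialSymbols (markovShift A)) :
    i' ∈ initialSymbols (markovShift A) := by
  obtain ⟨x, hx, rfl⟩ := h
  have step (k : ℕ) (s : Fin l) (hs : π s = π (x k)) :
      ∃ t, A s t = 1 ∧ π t = π (x (k + 1)) := hM.exists_transition hA01 (hx k) hs
  choose! next hnext using step
  have hfib (k : ℕ) : π (Nat.rec i' next k) = π (x k) := by
    induction k with
    | zero => exact hi
    | succ k ih => exact (hnext k _ ih).2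
  exact ⟨fun k => Nat.rec i' next k, fun k => (hnext k _ (hfib k)).1, rfl⟩

lemma OrdinarilyLumpable.indicator_initialSymbols_factorsThrough {π : Fin l → T}
    {F : Fin l → Fin l → ℝ} (hM : OrdinarilyLumpable π (MC A F))
    (hA01 : ∀ i j, A i j = 0 ∨ A i j = 1) :
    ((initialSymbols (markovShift A)).indicator (1 : Fin l → ℝ)).FactorsThrough π := by
  intro i i' hi
  have : i ∈ initialSymbols (markovShift A) ↔ i' ∈ initialSymbols (markovShift A) :=
    ⟨hM.mem_initialSymbols hA01 hi.symm, hM.mem_initialSymbols hA01 hi⟩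
  simp [Set.indicator_apply, this]

lemma hseqC_add_three (hA01 : ∀ i j, A i j = 0 ∨ A i j = 1) {π : Fin l → Fin 2}
    {F : Fin l → Fin l → ℝ}
    (hM : OrdinarilyLumpable π (MC A F) ∨ ExactlyLumpable π (MC A F))
    (f : (ℕ → Fin l) → ℝ) (n : ℕ) (y : ℕ → Fin 2) :
    hseqC (markovShift A) π F f (n + 3) y =
      averageColSum π (MC A F) (y 0) (y 1) *
        hseqC (markovShift A) π F f (n + 2) (shift y) := by
  rw [hseqC_add_two hA01, hseqC_add_two hA01]
  exact sum_continuationWeight_succ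
    (hM.imp_left fun h => ⟨h, h.indicator_initialSymbols_factorsThrough hA01⟩) (n + 1) y

end Potential

end MarkovShift

lemma lumpable_projC_of_antidiagonal {R : Type*} [AddCommMonoid R] {M : Fin 3 → Fin 3 → R} {a : R}
    (hsub : (Matrix.of fun i j : Fin 2 => M i.succ j.succ) = !![0, a; a, 0])
    (h : M 1 0 = M 2 0 ∨ M 0 1 = M 0 2) :
    OrdinarilyLumpable projC M ∨ ExactlyLumpable projC M := by
  have hblock (i j : Fin 2) : M i.succ j.succ = !![0, a; a, 0] i j :=
    congrFun (congrFun hsub i) j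
  have h11 : M 1 1 = 0 := hblock 0 0
  have h12 : M 1 2 = a := hblock 0 1
  have h21 : M 2 1 = a := hblock 1 0
  have h22 : M 2 2 = 0 := hblock 1 1
  refine h.imp (fun h b i i' hi => ?_) (fun h b i i' hi => ?_) <;>
    fin_cases b <;> fin_cases i <;> fin_cases i' <;>
    simp_all [projC, Finset.sum_filter, Fin.sum_univ_three]

theorem stmt_11_general {l : ℕ} (A : Fin l → Fin l → ℕ) (hA01 : ∀ i j, A i j = 0 ∨ A i j = 1)
    (π : Fin l → Fin 2) (F : Fin l → Fin l → ℝ)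
    (hM : OrdinarilyLumpable π (MC A F) ∨ ExactlyLumpable π (MC A F)) :
    ∃ hhat : (ℕ → Fin 2) → ℝ,
      (∀ y ∈ (π ∘ ·) '' markovShift A, Tendsto (fun n : ℕ =>
        Real.log (hseqC (markovShift A) π F (fun x => F (x 0) (x 1)) (n + 2) y /
          hseqC (markovShift A) π F (fun x => F (x 0) (x 1)) (n + 1) (shift y)))
        atTop (𝓝 (hhat y))) ∧
      ContinuousOn hhat ((π ∘ ·) '' markovShift A) := by
  refine ⟨fun y => Real.log (averageColSum π (MC A F) (y 0) (y 1)), ?_, ?_⟩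
  · rintro _ ⟨x, hx, rfl⟩
    rw [← tendsto_add_atTop_iff_nat 1]
    refine tendsto_const_nhds.congr fun n => ?_
    have hpos := hseqC_add_two_pos (shift_mem_markovShift hx) π F (fun x => F (x 0) (x 1)) n
    rw [hseqC_add_three hA01 hM]
    exact congrArg Real.log (mul_div_cancel_right₀ _ hpos.ne').symm
  · have hcont : Continuous fun p : Fin 2 × Fin 2 =>
        Real.log (averageColSum π (MC A F) p.1 p.2) := continuous_of_discreteTopology
    exact (hcont.comp (f := fun y : ℕ → Fin 2 => (y 0, y 1)) (by fun_prop)).continuousOn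

/-- Lemma `exception`, continuous case: under Setting (C), if
`M_{22}|_{π^{-1}(22)} = [[0,a₁],[a₁,0]]` with `a₁ > 0` and `M_{21} = M_{31}` or
`M_{12} = M_{13}`, then `ĥ(y) = lim log(h_n(y)/h_{n-1}(σ_Y y))` exists at every `y ∈ Y`
and is continuous on `Y`. (Symbols `1,2,3` of the paper are `0,1,2` here, and symbols
`1,2` of `Y` are `0,1`.) -/
theorem stmt_11
    (A : Fin 3 → Fin 3 → ℕ) (hA01 : ∀ i j, A i j = 0 ∨ A i j = 1)
    (X : Set (ℕ → Fin 3)) (hXdef : X = {x | ∀ n : ℕ, A (x n) (x (n + 1)) = 1})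
    (hXirr : IrreducibleShift X)
    (Y : Set (ℕ → Fin 2))
    (hYdef : Y = Set.univ ∨ Y = {y | ∀ n : ℕ, ¬(y n = 0 ∧ y (n + 1) = 0)})
    (hYirr : IrreducibleShift Y)
    (hsurj : (fun x => (projC (l := 3)) ∘ x) '' X = Y)
    (F : Fin 3 → Fin 3 → ℝ) (f : (ℕ → Fin 3) → ℝ)
    (hf : ∀ x : ℕ → Fin 3, f x = F (x 0) (x 1))
    (a₁ : ℝ) (ha₁ : 0 < a₁)
    (hMsub : (Matrix.of fun i j : Fin 2 => MC A F i.succ j.succ) = !![(0 : ℝ), a₁; a₁, 0])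
    (hcond : MC A F 1 0 = MC A F 2 0 ∨ MC A F 0 1 = MC A F 0 2) :
    ∃ hhat : (ℕ → Fin 2) → ℝ,
      (∀ y ∈ Y, Tendsto (fun n : ℕ =>
        Real.log (hseqC X projC F f (n + 2) y / hseqC X projC F f (n + 1) (shift y)))
        atTop (𝓝 (hhat y))) ∧
      ContinuousOn hhat Y := by
  obtain rfl : f = fun x => F (x 0) (x 1) := funext hf
  subst hXdef hsurj
  exact stmt_11_general A hA01 projC F (lumpable_projC_of_antidiagonal hMsub hcond)
end
end

section
/- Let M be a 2×2 real matrix with nonnegative entries such that s(M^n) > 0 for every n ≥ 1, where s(N) denotes the sum of all entries of a matrix N. If M is similar over ℝ to the Jordan block [[α, 1],[0, α]] for some α ∈ ℝ, then α > 0 and lim_{n→∞} s(M^{n+1})/s(M^n) = α. -/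
open Filter Topology

/-!
Let `a = α + N` with `N` nilpotent and `α ≠ 0`. By the binomial theorem, any linear functional `φ`
satisfies `φ (a ^ n) = α ^ n * p(n)` for a fixed polynomial `p`. If `p ≠ 0` then `p(n + 1) / p(n)`
tends to `1`, so `φ (a ^ (n + 1)) / φ (a ^ n)` tends to `α`. When the values `φ (a ^ n)` are
eventually positive, `α = 0` is impossible since `a` would be nilpotent, and the limit `α` of a
sequence of positive ratios is nonnegative. A matrix similar to a Jordan block with eigenvalue `α`
is of this form, and the sum of its entries is a linear functional.
-/

open Polynomial

theorem add_pow_eq_sum_range_of_pow_eq_zero {R : Type*} [Semiring R] {x y : R} (h : Commute x y)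
    {k : ℕ} (hx : x ^ k = 0) (n : ℕ) :
    (x + y) ^ n = ∑ j ∈ Finset.range k, x ^ j * y ^ (n - j) * (n.choose j : R) := by
  rw [h.add_pow]
  refine Finset.sum_congr_of_eq_on_inter (fun j _ hj => ?_) (fun j _ hj => ?_) fun _ _ _ => rfl
  · rw [pow_eq_zero_of_le (by simpa using hj) hx, zero_mul, zero_mul]
  · rw [Nat.choose_eq_zero_of_lt (by simpa using hj), Nat.cast_zero, mul_zero]

theorem map_pow_eq_sum_range_of_sub_algebraMap_pow_eq_zero {K R : Type*} [CommRing K] [Ring R]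
    [Algebra K R] (φ : R →ₗ[K] K) {a : R} {α : K} {k : ℕ}
    (ha : (a - algebraMap K R α) ^ k = 0) (n : ℕ) :
    φ (a ^ n) =
      ∑ j ∈ Finset.range k, α ^ (n - j) * n.choose j * φ ((a - algebraMap K R α) ^ j) := by
  have hcomm : Commute (a - algebraMap K R α) (algebraMap K R α) :=
    (Algebra.commutes α _).symm
  have hpow := add_pow_eq_sum_range_of_pow_eq_zero hcomm ha n
  rw [sub_add_cancel] at hpow
  rw [hpow, map_sum]
  refine Finset.sum_congr rfl fun j _ => ?_
  have hsmul : (a - algebraMap K R α) ^ j * algebraMap K R α ^ (n - j) * (n.choose j : R) =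
      (α ^ (n - j) * n.choose j) • (a - algebraMap K R α) ^ j := by
    rw [mul_assoc, ← map_natCast (algebraMap K R), ← map_pow, ← map_mul, ← Algebra.commutes,
      Algebra.smul_def]
  rw [hsmul, map_smul, smul_eq_mul]

theorem exists_polynomial_map_pow_eq_pow_mul_eval {K R : Type*} [Field K] [CharZero K] [Ring R]
    [Algebra K R] (φ : R →ₗ[K] K) {a : R} {α : K} (hα : α ≠ 0)
    (ha : IsNilpotent (a - algebraMap K R α)) :
    ∃ p : K[X], ∀ n : ℕ, φ (a ^ n) = α ^ n * p.eval (n : K) := by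
  obtain ⟨k, hk⟩ := ha
  refine ⟨∑ j ∈ Finset.range k, C (φ ((a - algebraMap K R α) ^ j) / (α ^ j * j.factorial)) *
    descPochhammer K j, fun n => ?_⟩
  rw [map_pow_eq_sum_range_of_sub_algebraMap_pow_eq_zero φ hk, eval_finsetSum, Finset.mul_sum]
  refine Finset.sum_congr rfl fun j _ => ?_
  rw [eval_mul, eval_C]
  rcases le_or_gt j n with hjn | hnj
  · rw [pow_sub₀ α hα hjn, Nat.cast_choose_eq_descPochhammer_div]
    field_simp
  · rw [descPochhammer_eval_eq_descFactorial, Nat.choose_eq_zero_of_lt hnj,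
      Nat.descFactorial_of_lt hnj, Nat.cast_zero]
    ring

section RatioLimit

variable {𝕜 R : Type*} [NormedField 𝕜] [LinearOrder 𝕜] [IsStrictOrderedRing 𝕜] [OrderTopology 𝕜]
  [Archimedean 𝕜] [Ring R] [Algebra 𝕜 R]

theorem tendsto_eval_natCast_succ_div_eval_natCast {p : 𝕜[X]} (hp : p ≠ 0) :
    Tendsto (fun n : ℕ => p.eval ((n + 1 : ℕ) : 𝕜) / p.eval (n : 𝕜)) atTop (𝓝 1) := by
  have hshift : Tendsto (fun x => (taylor 1 p).eval x / p.eval x) atTop (𝓝 1) := by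
    have hlim := div_tendsto_atTop_leadingCoeff_div_of_degree_eq _ _ (degree_taylor p 1)
    rwa [leadingCoeff_taylor, div_self (leadingCoeff_ne_zero.mpr hp)] at hlim
  simpa only [Function.comp_def, taylor_eval, Nat.cast_succ] using
    hshift.comp tendsto_natCast_atTop_atTop

theorem tendsto_map_pow_succ_div_map_pow (φ : R →ₗ[𝕜] 𝕜) {a : R} {α : 𝕜} (hα : α ≠ 0)
    (ha : IsNilpotent (a - algebraMap 𝕜 R α)) (hφ : ∃ n : ℕ, φ (a ^ n) ≠ 0) :
    Tendsto (fun n : ℕ => φ (a ^ (n + 1)) / φ (a ^ n)) atTop (𝓝 α) := by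
  obtain ⟨p, hp⟩ := exists_polynomial_map_pow_eq_pow_mul_eval φ hα ha
  have hp0 : p ≠ 0 := by
    rintro rfl
    obtain ⟨n, hn⟩ := hφ
    exact hn (by rw [hp, eval_zero, mul_zero])
  have hlim := (tendsto_eval_natCast_succ_div_eval_natCast hp0).const_mul α
  rw [mul_one] at hlim
  refine hlim.congr fun n => ?_
  rw [hp, hp, mul_div_mul_comm, pow_succ, mul_div_cancel_left₀ _ (pow_ne_zero n hα)]

theorem stmt_13_general (φ : R →ₗ[𝕜] 𝕜) {a : R} {α : 𝕜}
    (ha : IsNilpotent (a - algebraMap 𝕜 R α)) (hpos : ∀ᶠ n : ℕ in atTop, 0 < φ (a ^ n)) :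
    0 < α ∧ Tendsto (fun n : ℕ => φ (a ^ (n + 1)) / φ (a ^ n)) atTop (𝓝 α) := by
  have hα : α ≠ 0 := by
    rintro rfl
    obtain ⟨k, hk⟩ := ha
    rw [map_zero, sub_zero] at hk
    obtain ⟨n, hn, hkn⟩ := (hpos.and (eventually_ge_atTop k)).exists
    rw [pow_eq_zero_of_le hkn hk, map_zero] at hn
    exact hn.false
  have hlim := tendsto_map_pow_succ_div_map_pow φ hα ha (hpos.exists.imp fun _ hn => hn.ne')
  have hratio : ∀ᶠ n : ℕ in atTop, 0 ≤ φ (a ^ (n + 1)) / φ (a ^ n) := by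
    filter_upwards [hpos, (tendsto_add_atTop_nat 1).eventually hpos] with n hn hn1
    exact (div_pos hn1 hn).le
  exact ⟨(ge_of_tendsto hlim hratio).lt_of_ne' hα, hlim⟩

end RatioLimit

section Similarity

theorem isNilpotent_of_semiconjBy {R : Type*} [MonoidWithZero R] {u x y : R} (hu : IsUnit u)
    (h : SemiconjBy u x y) (hx : IsNilpotent x) : IsNilpotent y := by
  obtain ⟨k, hk⟩ := hx
  refine ⟨k, hu.mul_left_eq_zero.mp ?_⟩
  rw [← (h.pow_right k).eq, hk, mul_zero]

variable {R : Type*} [CommRing R]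

theorem isNilpotent_jordanBlock_sub_algebraMap (α : R) :
    IsNilpotent (!![α, 1; 0, α] - algebraMap R (Matrix (Fin 2) (Fin 2) R) α) := by
  refine ⟨2, ?_⟩
  ext i j
  fin_cases i <;> fin_cases j <;>
    simp [pow_two, Matrix.mul_apply, Matrix.algebraMap_matrix_apply]

theorem isNilpotent_sub_algebraMap_of_eq_inv_mul_mul {ι : Type*} [Fintype ι] [DecidableEq ι]
    {M J P : Matrix ι ι R} {α : R} (hP : IsUnit P.det) (hJ : J = P⁻¹ * M * P)
    (hnil : IsNilpotent (J - algebraMap R (Matrix ι ι R) α)) :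
    IsNilpotent (M - algebraMap R (Matrix ι ι R) α) := by
  have hconj : SemiconjBy P J M := by
    rw [SemiconjBy, hJ, mul_assoc, Matrix.mul_nonsing_inv_cancel_left _ _ hP]
  have hscalar : SemiconjBy P (algebraMap R (Matrix ι ι R) α) (algebraMap R (Matrix ι ι R) α) :=
    (Algebra.commutes α P).symm
  exact isNilpotent_of_semiconjBy ((Matrix.isUnit_iff_isUnit_det P).mpr hP)
    (hconj.sub_right hscalar) hnil

end Similarity

/-- The sum `s(N)` of all entries of a matrix `N`, as a linear functional. -/
def entrySum (m n R : Type*) [Fintype m] [Fintype n] [Semiring R] : Matrix m n R →ₗ[R] R :=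
  ∑ i, ∑ j, Matrix.entryLinearMap R R i j

theorem entrySum_apply {m n R : Type*} [Fintype m] [Fintype n] [Semiring R] (N : Matrix m n R) :
    entrySum m n R N = ∑ i, ∑ j, N i j := by
  simp only [entrySum, LinearMap.sum_apply, Matrix.entryLinearMap_apply]

/-- Lemma `2inf` (1): if a nonnegative `2 × 2` real matrix `M` with
`s(M^n) > 0` for all `n ≥ 1` is similar over `ℝ` to the Jordan block `[[α,1],[0,α]]`,
then `α > 0` and `s(M^{n+1})/s(M^n) → α`, where `s` is the sum of all entries. -/
theorem stmt_13 (M : Matrix (Fin 2) (Fin 2) ℝ)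
    (hM : ∀ i j, 0 ≤ M i j)
    (hs : ∀ n : ℕ, 1 ≤ n → 0 < ∑ i : Fin 2, ∑ j : Fin 2, (M ^ n) i j)
    (α : ℝ)
    (hsim : ∃ P : Matrix (Fin 2) (Fin 2) ℝ, IsUnit P.det ∧
      !![α, 1; 0, α] = P⁻¹ * M * P) :
    0 < α ∧
    Tendsto (fun n : ℕ =>
        (∑ i : Fin 2, ∑ j : Fin 2, (M ^ (n + 1)) i j) /
          (∑ i : Fin 2, ∑ j : Fin 2, (M ^ n) i j)) atTop (𝓝 α) := by
  obtain ⟨P, hP, hJ⟩ := hsim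
  have hnil := isNilpotent_sub_algebraMap_of_eq_inv_mul_mul hP hJ
    (isNilpotent_jordanBlock_sub_algebraMap α)
  simp only [← entrySum_apply] at hs ⊢
  exact stmt_13_general (entrySum _ _ ℝ) hnil (eventually_atTop.mpr ⟨1, hs⟩)
end

section
/- Let M be a 2×2 real matrix with nonnegative entries such that s(M^n) > 0 for every n ≥ 1, where s(N) denotes the sum of all entries of a matrix N. If M is similar over ℝ to the diagonal matrix diag(α, β) for real numbers α, β with β ≠ −α, then (α, β) ≠ (0, 0) and the limit lim_{n→∞} s(M^{n+1})/s(M^n) exists and is a positive real number. -/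
open Filter Topology

/-!
Similarity to `diag(d)` turns `u ⬝ᵥ M ^ n *ᵥ v` into an exponential sum `∑ c x * x ^ n` over the
distinct eigenvalues `x`. Among the nonzero eigenvalues with `c x ≠ 0`, no two have the same
absolute value, so one of them strictly dominates the others and is the limit of the ratio of
consecutive terms. A limit of ratios of positive numbers is nonnegative, hence this eigenvalue is
positive.
-/

section ExponentialSum

variable {𝕜 : Type*} [NormedField 𝕜] {s : Finset 𝕜} {c : 𝕜 → 𝕜} {x : 𝕜}

theorem tendsto_sum_mul_pow_div_pow (hxs : x ∈ s) (hx : x ≠ 0)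
    (hdom : ∀ y ∈ s, y ≠ x → ‖y‖ < ‖x‖) :
    Tendsto (fun n : ℕ => (∑ y ∈ s, c y * y ^ n) / x ^ n) atTop (𝓝 (c x)) := by
  classical
  have hterm : ∀ y ∈ s, Tendsto (fun n : ℕ => c y * (y / x) ^ n) atTop
      (𝓝 (if y = x then c y else 0)) := by
    intro y hy
    split_ifs with hyx
    · simp [hyx, div_self hx]
    · have hlt : ‖y / x‖ < 1 := by
        rw [norm_div, div_lt_one (norm_pos_iff.mpr hx)]
        exact hdom y hy hyx
      simpa using (tendsto_pow_atTop_nhds_zero_of_norm_lt_one hlt).const_mul (c y)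
  have hsum := tendsto_finsetSum s hterm
  rw [Finset.sum_ite_eq' s x c, if_pos hxs] at hsum
  refine hsum.congr fun n => ?_
  simp only [Finset.sum_div, div_pow, mul_div_assoc]

theorem tendsto_succ_div_of_tendsto_div_pow {f : ℕ → 𝕜} {a : 𝕜} (hx : x ≠ 0) (ha : a ≠ 0)
    (hf : Tendsto (fun n => f n / x ^ n) atTop (𝓝 a)) :
    Tendsto (fun n => f (n + 1) / f n) atTop (𝓝 x) := by
  have hratio : Tendsto (fun n => x * ((f (n + 1) / x ^ (n + 1)) / (f n / x ^ n))) atTop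
      (𝓝 (x * (a / a))) :=
    (((tendsto_add_atTop_iff_nat 1).mpr hf).div hf ha).const_mul x
  rw [div_self ha, mul_one] at hratio
  refine hratio.congr fun n => ?_
  have hxn : x ^ n ≠ 0 := pow_ne_zero n hx
  rw [pow_succ, div_div_div_eq]
  field_simp

theorem exists_tendsto_succ_div_sum_finset_mul_pow (hs : Set.InjOn norm (s : Set 𝕜))
    (hne : ∃ n ≠ 0, ∑ y ∈ s, c y * y ^ n ≠ 0) :
    ∃ x ∈ s, x ≠ 0 ∧ Tendsto
      (fun n : ℕ => (∑ y ∈ s, c y * y ^ (n + 1)) / ∑ y ∈ s, c y * y ^ n) atTop (𝓝 x) := by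
  classical
  set t := s.filter fun y => y ≠ 0 ∧ c y ≠ 0
  have hsum {n : ℕ} (hn : n ≠ 0) : ∑ y ∈ t, c y * y ^ n = ∑ y ∈ s, c y * y ^ n := by
    refine Finset.sum_filter_of_ne fun y _ hy => ⟨?_, left_ne_zero_of_mul hy⟩
    rintro rfl
    simp [hn] at hy
  have htne : t.Nonempty := by
    obtain ⟨n, hn, hne⟩ := hne
    exact Finset.nonempty_of_sum_ne_zero (hsum hn ▸ hne)
  obtain ⟨x, hxt, hmax⟩ := t.exists_max_image norm htne
  obtain ⟨hxs, hx, hcx⟩ := Finset.mem_filter.mp hxt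
  have hdom : ∀ y ∈ t, y ≠ x → ‖y‖ < ‖x‖ := fun y hy hyx =>
    (hmax y hy).lt_of_ne fun heq => hyx (hs (Finset.mem_filter.mp hy).1 hxs heq)
  refine ⟨x, hxs, hx, tendsto_succ_div_of_tendsto_div_pow
    (f := fun n => ∑ y ∈ s, c y * y ^ n) hx hcx ?_⟩
  refine (tendsto_sum_mul_pow_div_pow hxt hx hdom).congr' ?_
  filter_upwards [eventually_ne_atTop 0] with n hn
  rw [hsum hn]

theorem exists_tendsto_succ_div_sum_mul_pow {ι : Type*} [Fintype ι] {c d : ι → 𝕜}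
    (hd : ∀ i j, ‖d i‖ = ‖d j‖ → d i = d j) (hne : ∃ n ≠ 0, ∑ i, c i * d i ^ n ≠ 0) :
    ∃ i, d i ≠ 0 ∧ Tendsto
      (fun n : ℕ => (∑ i, c i * d i ^ (n + 1)) / ∑ i, c i * d i ^ n) atTop (𝓝 (d i)) := by
  classical
  have hgroup (n : ℕ) : ∑ i, c i * d i ^ n =
      ∑ y ∈ Finset.univ.image d, (∑ i with d i = y, c i) * y ^ n := by
    rw [← Finset.sum_fiberwise_of_maps_to fun i hi => Finset.mem_image_of_mem d hi]
    refine Finset.sum_congr rfl fun y _ => ?_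
    rw [Finset.sum_mul]
    exact Finset.sum_congr rfl fun i hi => by rw [(Finset.mem_filter.mp hi).2]
  have hinj : Set.InjOn norm (Finset.univ.image d : Set 𝕜) := by
    simpa [Set.InjOn] using hd
  simp only [hgroup] at hne ⊢
  obtain ⟨x, hx, hx0, hlim⟩ := exists_tendsto_succ_div_sum_finset_mul_pow hinj hne
  obtain ⟨i, -, rfl⟩ := Finset.mem_image.mp hx
  exact ⟨i, hx0, hlim⟩

end ExponentialSum

section Matrix

open Matrix

variable {ι : Type*} [Fintype ι]

theorem one_dotProduct_mulVec_one {κ R : Type*} [Fintype κ] [NonAssocSemiring R]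
    (N : Matrix ι κ R) :
    1 ⬝ᵥ N *ᵥ 1 = ∑ i, ∑ j, N i j := by
  simp [dotProduct, mulVec]

theorem dotProduct_pow_mulVec_of_semiconjBy_diagonal [DecidableEq ι] {R : Type*} [CommSemiring R]
    {M P : Matrix ι ι R} {d : ι → R} (h : SemiconjBy P (diagonal d) M) (u w : ι → R) (n : ℕ) :
    u ⬝ᵥ M ^ n *ᵥ (P *ᵥ w) = ∑ i, (u ᵥ* P) i * w i * d i ^ n := by
  have hpow : M ^ n * P = P * diagonal (d ^ n) := by
    rw [← diagonal_pow, (h.pow_right n).eq]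
  rw [mulVec_mulVec, hpow, ← mulVec_mulVec, dotProduct_mulVec]
  refine Finset.sum_congr rfl fun i _ => ?_
  rw [mulVec_diagonal, Pi.pow_apply, mul_assoc, mul_comm (w i)]

theorem stmt_14_general [DecidableEq ι] {M P : Matrix ι ι ℝ} {d : ι → ℝ}
    (hd : ∀ i j, |d i| = |d j| → d i = d j) (hP : IsUnit P.det)
    (hsim : diagonal d = P⁻¹ * M * P) {u v : ι → ℝ}
    (hpos : ∀ᶠ n : ℕ in atTop, 0 < u ⬝ᵥ M ^ n *ᵥ v) :
    ∃ i, 0 < d i ∧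
      Tendsto (fun n : ℕ => (u ⬝ᵥ M ^ (n + 1) *ᵥ v) / (u ⬝ᵥ M ^ n *ᵥ v)) atTop (𝓝 (d i)) := by
  have hconj : SemiconjBy P (diagonal d) M := by
    rw [SemiconjBy, hsim, Matrix.mul_assoc, mul_nonsing_inv_cancel_left P _ hP]
  obtain ⟨w, rfl⟩ : ∃ w, P *ᵥ w = v :=
    ⟨P⁻¹ *ᵥ v, by rw [mulVec_mulVec, mul_nonsing_inv P hP, one_mulVec]⟩
  simp only [dotProduct_pow_mulVec_of_semiconjBy_diagonal hconj] at hpos ⊢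
  obtain ⟨n, hn, hn0⟩ := (hpos.and (eventually_ne_atTop 0)).exists
  obtain ⟨i, hi, hlim⟩ := exists_tendsto_succ_div_sum_mul_pow hd ⟨n, hn0, hn.ne'⟩
  have hnonneg : 0 ≤ d i := by
    refine ge_of_tendsto hlim ?_
    filter_upwards [hpos, (tendsto_add_atTop_nat 1).eventually hpos] with n hn hn1
    exact (div_pos hn1 hn).le
  exact ⟨i, hnonneg.lt_of_ne' hi, hlim⟩

end Matrix

/-- Lemma `2inf` (2): if a nonnegative `2 × 2` real matrix `M` with
`s(M^n) > 0` for all `n ≥ 1` is similar over `ℝ` to `diag(α, β)` with `β ≠ −α`, then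
`(α, β) ≠ (0, 0)` and `s(M^{n+1})/s(M^n)` converges to a positive real number, where `s`
is the sum of all entries. -/
theorem stmt_14 (M : Matrix (Fin 2) (Fin 2) ℝ)
    (hM : ∀ i j, 0 ≤ M i j)
    (hs : ∀ n : ℕ, 1 ≤ n → 0 < ∑ i : Fin 2, ∑ j : Fin 2, (M ^ n) i j)
    (α β : ℝ) (hβ : β ≠ -α)
    (hsim : ∃ P : Matrix (Fin 2) (Fin 2) ℝ, IsUnit P.det ∧
      !![α, 0; 0, β] = P⁻¹ * M * P) :
    ¬(α = 0 ∧ β = 0) ∧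
    ∃ L : ℝ, 0 < L ∧
      Tendsto (fun n : ℕ =>
          (∑ i : Fin 2, ∑ j : Fin 2, (M ^ (n + 1)) i j) /
            (∑ i : Fin 2, ∑ j : Fin 2, (M ^ n) i j)) atTop (𝓝 L) := by
  obtain ⟨P, hP, hdiag⟩ := hsim
  have habs : |β| = |α| → β = α := fun h => (abs_eq_abs.mp h).resolve_right hβ
  have hd : ∀ i j, |![α, β] i| = |![α, β] j| → ![α, β] i = ![α, β] j := by
    simpa [Fin.forall_fin_two] using ⟨fun h => (habs h.symm).symm, habs⟩
  simp only [← one_dotProduct_mulVec_one] at hs ⊢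
  obtain ⟨i, hi, hlim⟩ := stmt_14_general hd hP (by simpa [Matrix.diagonal_fin_two] using hdiag)
    ((eventually_ge_atTop 1).mono hs)
  exact ⟨fun h => hβ (by simp [h]), _, hi, hlim⟩
end
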